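/- arXiv:2403.19378 — 3 statements merged into one kernel-verified Lean document; each statement's English description precedes it below -/
import Mathlib

section
/- Let Φ be a set of functional dependencies over a finite schema 𝓡 and let P = [C_1,…,C_m] be an ordered partition of 𝓡. If Φ is forward repairable over P, then Φ is sequentially repairable over P. (Proposition 1 of the paper.) -/
/-- A functional dependency over a set of attributes `α`: a pair `X → a`
with left-hand side `X` (a finite set of attributes) and right-hand side `a`. -/
structure FD (α : Type*) where
  lhs : Finset α
  rhs : α

/-- A relation `R : T → α → V` (assigning to each tuple identifier a tuple)
satisfies the FD `φ` if tuples agreeing on `lhs φ` agree on `rhs φ`. -/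
def SatFD {α V T : Type*} (R : T → α → V) (φ : FD α) : Prop :=
  ∀ t1 t2 : T, (∀ b ∈ φ.lhs, R t1 b = R t2 b) → R t1 φ.rhs = R t2 φ.rhs

/-- `R` satisfies a set of FDs if it satisfies every FD in the set. -/
def SatSet {α V T : Type*} (R : T → α → V) (Φ : Set (FD α)) : Prop :=
  ∀ φ ∈ Φ, SatFD R φ

/-- The projection `Φ[Z]` of a set of FDs over a set of attributes `Z`. -/
def proj {α : Type*} (Φ : Set (FD α)) (Z : Finset α) : Set (FD α) :=
  {φ | φ ∈ Φ ∧ φ.lhs ⊆ Z ∧ φ.rhs ∈ Z}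

/-- The prefix union `S_i = C_1 ∪ … ∪ C_i` of an ordered partition. -/
def prefS {α : Type*} [DecidableEq α] (P : List (Finset α)) (i : ℕ) : Finset α :=
  (P.take i).foldr (· ∪ ·) ∅

/-- `P = [C_1, …, C_m]` is an ordered partition of the (finite) schema:
a list of pairwise disjoint nonempty classes whose union is the whole schema. -/
def OrderedPartition {α : Type*} [DecidableEq α] [Fintype α] (P : List (Finset α)) : Prop :=
  (∀ C ∈ P, C.Nonempty) ∧ P.Pairwise Disjoint ∧ P.foldr (· ∪ ·) ∅ = Finset.univ

/-- `Φ` is forward repairable over `P`: for every `i`, every FD in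
`Φ[S_i] \ Φ[S_{i-1}]` has its right-hand side in `C_i`. -/
def ForwardRepairable {α : Type*} [DecidableEq α] (P : List (Finset α)) (Φ : Set (FD α)) : Prop :=
  ∀ (i : ℕ) (h : i < P.length),
    ∀ φ ∈ proj Φ (prefS P (i + 1)) \ proj Φ (prefS P i), φ.rhs ∈ P.get ⟨i, h⟩

/-- `Φ` is sequentially repairable over `P` (for tuple ids `T` and values `V`):
every partial repair `R_{i-1}` of `Φ[S_{i-1}]` can be turned into a partial repair
of `Φ[S_i]` by modifying only attributes outside `S_{i-1}`. -/
def SeqRepairable {α : Type*} [DecidableEq α] (T V : Type*) (P : List (Finset α)) (Φ : Set (FD α)) : Prop :=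
  ∀ i : ℕ, i < P.length →
    ∀ Rprev : T → α → V, SatSet Rprev (proj Φ (prefS P i)) →
      ∃ Rnext : T → α → V, SatSet Rnext (proj Φ (prefS P (i + 1))) ∧
        ∀ t : T, ∀ a ∈ prefS P i, Rnext t a = Rprev t a

/-! An FD violation needs two tuples that disagree on the right-hand side. Keep `R_{i-1}` on
`S_{i-1}` and give every other attribute the value it has in one reference tuple. By forward
repairability, an FD of `Φ[S_i]` either belongs to `Φ[S_{i-1}]`, hence is not affected, or has its
right-hand side in `C_i`, hence among the attributes that are now constant. -/

section Satisfaction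

variable {α V T : Type*} {R R' : T → α → V} {φ : FD α}

theorem SatFD.of_eqOn {Z : Set α} (hR : SatFD R φ) (hlhs : ↑φ.lhs ⊆ Z) (hrhs : φ.rhs ∈ Z)
    (h : ∀ t, Set.EqOn (R' t) (R t) Z) : SatFD R' φ := by
  intro t₁ t₂ hagree
  rw [h t₁ hrhs, h t₂ hrhs]
  refine hR t₁ t₂ fun b hb => ?_
  rw [← h t₁ (hlhs hb), ← h t₂ (hlhs hb), hagree b hb]

theorem SatFD.of_rhs_eq_const {c : V} (h : ∀ t, R t φ.rhs = c) : SatFD R φ :=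
  fun t₁ t₂ _ => (h t₁).trans (h t₂).symm

theorem SatSet.piecewise_const [DecidableEq α] {Φ Ψ : Set (FD α)} {S : Finset α}
    (hR : SatSet R (proj Φ S)) (hΨ : ∀ φ ∈ Ψ \ proj Φ S, φ.rhs ∉ S) (v : α → V) :
    SatSet (fun t => S.piecewise (R t) v) Ψ := by
  intro φ hφ
  by_cases hold : φ ∈ proj Φ S
  · exact (hR φ hold).of_eqOn hold.2.1 hold.2.2 fun t _ ha => S.piecewise_eq_of_mem (R t) v ha
  · exact .of_rhs_eq_const fun t => S.piecewise_eq_of_notMem (R t) v (hΨ φ ⟨hφ, hold⟩)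

end Satisfaction

section Repairability

variable {α : Type*} [DecidableEq α] {P : List (Finset α)}

theorem prefS_eq_sup (i : ℕ) : prefS P i = (P.take i).toFinset.sup id :=
  List.foldr_sup_eq_sup_toFinset (P.take i)

theorem disjoint_prefS_getElem (hP : P.Pairwise Disjoint) {i : ℕ} (hi : i < P.length) :
    Disjoint (prefS P i) P[i] := by
  rw [prefS_eq_sup, Finset.disjoint_sup_left]
  intro C hC
  have hi_drop : P[i] ∈ P.drop i := List.drop_eq_getElem_cons hi ▸ List.mem_cons_self
  exact hP.rel_of_mem_take_of_mem_drop (List.mem_toFinset.mp hC) hi_drop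

theorem ForwardRepairable.rhs_notMem_prefS {Φ : Set (FD α)} (hfwd : ForwardRepairable P Φ)
    (hP : P.Pairwise Disjoint) {i : ℕ} (hi : i < P.length) {φ : FD α}
    (hφ : φ ∈ proj Φ (prefS P (i + 1)) \ proj Φ (prefS P i)) : φ.rhs ∉ prefS P i :=
  Finset.disjoint_right.mp (disjoint_prefS_getElem hP hi) (hfwd i hi φ hφ)

end Repairability

theorem forward_imp_sequential_general {α V T : Type*} [DecidableEq α]
    (P : List (Finset α)) (Φ : Set (FD α))
    (hP : P.Pairwise Disjoint)
    (hfwd : ForwardRepairable P Φ) :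
    SeqRepairable T V P Φ := by
  intro i hi R hR
  obtain _ | ⟨⟨t₀⟩⟩ := isEmpty_or_nonempty T
  · exact ⟨R, fun _ _ => isEmptyElim, isEmptyElim⟩
  · exact ⟨fun t => (prefS P i).piecewise (R t) (R t₀),
      hR.piecewise_const (fun _ => hfwd.rhs_notMem_prefS hP hi) (R t₀),
      fun t _ ha => (prefS P i).piecewise_eq_of_mem (R t) (R t₀) ha⟩

/-- Proposition 1: forward repairability implies sequential repairability. -/
theorem forward_imp_sequential {α V T : Type*} [DecidableEq α] [Fintype α] [Fintype T] [Nonempty V]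
    (P : List (Finset α)) (Φ : Set (FD α))
    (hP : OrderedPartition P)
    (hfwd : ForwardRepairable P Φ) :
    SeqRepairable T V P Φ :=
  forward_imp_sequential_general P Φ hP.2.1 hfwd
end

section
/- Let Φ be a set of functional dependencies over a finite schema 𝓡 (in the paper, a minimal cover of the given constraints), and let P = [C_1,…,C_m] be an ordered partition of 𝓡 induced by the preorder P⁺ obtained from Φ. Then Φ is forward repairable over P. (Theorem 1(i) of the paper.) -/
/-- The base relation `P_Φ` obtained from a set of FDs: it contains all pairs
`(a, a)` and all pairs `(b, a)` with `b ∈ X` for some FD `X → a` in `Φ`. -/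
def PPhi {α : Type*} (Φ : Set (FD α)) : α → α → Prop :=
  fun b a => b = a ∨ ∃ φ ∈ Φ, φ.rhs = a ∧ b ∈ φ.lhs

/-- The preorder `P⁺` obtained from `Φ`: the transitive closure of `P_Φ`. -/
def Pplus {α : Type*} (Φ : Set (FD α)) : α → α → Prop :=
  Relation.TransGen (PPhi Φ)

/-- The equivalence `a ≡_{P⁺} a'`: mutual `P⁺`-comparability. -/
def eqvP {α : Type*} (Φ : Set (FD α)) (a a' : α) : Prop :=
  Pplus Φ a a' ∧ Pplus Φ a' a

/-- The ordered partition `P` is induced by the preorder `P⁺` obtained from `Φ`: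
its classes are exactly the equivalence classes of `≡_{P⁺}`, and earlier classes
are never `P⁺`-above later ones. -/
def InducedBy {α : Type*} (P : List (Finset α)) (Φ : Set (FD α)) : Prop :=
  (∀ a a' : α, eqvP Φ a a' ↔
      ∃ (i : ℕ) (h : i < P.length), a ∈ P.get ⟨i, h⟩ ∧ a' ∈ P.get ⟨i, h⟩) ∧
  (∀ (i j : ℕ) (hi : i < P.length) (hj : j < P.length), i < j →
      ∀ a ∈ P.get ⟨i, hi⟩, ∀ a' ∈ P.get ⟨j, hj⟩, ¬ Pplus Φ a' a)

section

variable {α : Type*} {P : List (Finset α)} {Φ : Set (FD α)}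

theorem mem_prefS [DecidableEq α] {i : ℕ} {a : α} :
    a ∈ prefS P i ↔ ∃ C ∈ P.take i, a ∈ C := by
  unfold prefS
  induction P.take i with
  | nil => simp
  | cons C L ih => simp [ih]

theorem prefS_succ [DecidableEq α] {i : ℕ} (hi : i < P.length) :
    prefS P (i + 1) = prefS P i ∪ P[i] := by
  ext a
  simp only [mem_prefS, List.take_succ_eq_append_getElem hi, List.mem_append, List.mem_singleton,
    or_and_right, exists_or, exists_eq_left, Finset.mem_union]

theorem pplus_rhs_of_mem_lhs {φ : FD α} {b : α} (hφ : φ ∈ Φ) (hb : b ∈ φ.lhs) :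
    Pplus Φ b φ.rhs :=
  .single (.inr ⟨φ, hφ, rfl, hb⟩)

/-- No dependency of `Φ` points backwards along the list `P`: a dependency whose right-hand side
lies in some class has no left-hand attribute in a later one. This is what the order condition of
`InducedBy` says about a single dependency. -/
def NoBackwardFD (P : List (Finset α)) (Φ : Set (FD α)) : Prop :=
  P.Pairwise fun C D => ∀ φ ∈ Φ, φ.rhs ∈ C → Disjoint φ.lhs D

theorem InducedBy.noBackwardFD (hind : InducedBy P Φ) : NoBackwardFD P Φ := by
  refine List.pairwise_iff_getElem.mpr fun i j hi hj hij φ hφ hrhs => ?_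
  exact Finset.disjoint_left.mpr fun b hb hbj =>
    hind.2 i j hi hj hij φ.rhs hrhs b hbj (pplus_rhs_of_mem_lhs hφ hb)

theorem NoBackwardFD.disjoint_lhs_getElem [DecidableEq α] (hback : NoBackwardFD P Φ)
    {φ : FD α} (hφ : φ ∈ Φ) {i : ℕ} (hi : i < P.length) (hrhs : φ.rhs ∈ prefS P i) :
    Disjoint φ.lhs P[i] := by
  obtain ⟨C, hC, hrhsC⟩ := mem_prefS.mp hrhs
  obtain ⟨j, hj, rfl⟩ := List.mem_take_iff_getElem.mp hC
  have hji : j < i := by omega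
  exact List.pairwise_iff_getElem.mp hback j i (hji.trans hi) hi hji φ hφ hrhsC

theorem induced_forwardRepairable_general [DecidableEq α] (P : List (Finset α)) (Φ : Set (FD α))
    (hback : NoBackwardFD P Φ) : ForwardRepairable P Φ := by
  rintro i hi φ ⟨⟨hφ, hlhs, hrhs⟩, hnew⟩
  rw [prefS_succ hi] at hlhs hrhs
  have hrhs_not_prev : φ.rhs ∉ prefS P i := by
    intro hrhs_prev
    have hdisj : Disjoint φ.lhs P[i] := hback.disjoint_lhs_getElem hφ hi hrhs_prev
    exact hnew ⟨hφ, hdisj.left_le_of_le_sup_right hlhs, hrhs_prev⟩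
  exact (Finset.mem_union.mp hrhs).resolve_left hrhs_not_prev

end

/-- Theorem 1(i): a partition induced by the preorder `P⁺` obtained from `Φ`
is forward repairable for `Φ`. -/
theorem induced_forwardRepairable {α : Type*} [DecidableEq α] [Fintype α]
    (P : List (Finset α)) (Φ : Set (FD α))
    (hP : OrderedPartition P)
    (hind : InducedBy P Φ) :
    ForwardRepairable P Φ :=
  induced_forwardRepairable_general P Φ hind.noBackwardFD
end

section
/- Let R be a relation over a finite set T of tuple identifiers satisfying the unary FD {a'}→a and the FD X→a, where a ≠ a'. Let R' be a relation over T such that R'(t)(c) = R(t)(c) for every t ∈ T and every attribute c ≠ a', and such that for every t ∈ T there exists s ∈ T with R(s)(b) = R(t)(b) for all b ∈ X and R'(t)(a') = R(s)(a') (each tuple's new a'-value is the old a'-value of some tuple agreeing with it on X). Then R' satisfies {a'}→a. (The donor argument at the heart of the proof of Proposition 2.) -/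
theorem SatFD.of_forall_exists_agree {α V T T' : Type*} {φ : FD α}
    {R : T → α → V} {R' : T' → α → V} (hR : SatFD R φ)
    (hagree : ∀ t, ∃ s, (∀ b ∈ φ.lhs, R' t b = R s b) ∧ R' t φ.rhs = R s φ.rhs) :
    SatFD R' φ := by
  intro t₁ t₂ ht
  obtain ⟨s₁, hlhs₁, hrhs₁⟩ := hagree t₁
  obtain ⟨s₂, hlhs₂, hrhs₂⟩ := hagree t₂
  have hs : ∀ b ∈ φ.lhs, R s₁ b = R s₂ b := fun b hb =>
    calc R s₁ b = R' t₁ b := (hlhs₁ b hb).symm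
      _ = R' t₂ b := ht b hb
      _ = R s₂ b := hlhs₂ b hb
  calc R' t₁ φ.rhs = R s₁ φ.rhs := hrhs₁
    _ = R s₂ φ.rhs := hR s₁ s₂ hs
    _ = R' t₂ φ.rhs := hrhs₂.symm

theorem donor_argument_general {α V T : Type*} {X Y : Finset α} {a : α}
    {R R' : T → α → V} (hY : SatFD R ⟨Y, a⟩) (hX : SatFD R ⟨X, a⟩)
    (hkeep : ∀ t, R' t a = R t a)
    (hdonor : ∀ t, ∃ s, (∀ b ∈ X, R s b = R t b) ∧ ∀ b ∈ Y, R' t b = R s b) :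
    SatFD R' ⟨Y, a⟩ := by
  refine hY.of_forall_exists_agree fun t => ?_
  obtain ⟨s, hst, hts⟩ := hdonor t
  have hdonor_rhs : R s a = R t a := hX s t hst
  exact ⟨s, hts, (hkeep t).trans hdonor_rhs.symm⟩

/-- The donor argument at the heart of the proof of Proposition 2: if `R`
satisfies the unary FD `{a'} → a` and the FD `X → a`, and `R'` changes only
attribute `a'`, giving each tuple the old `a'`-value of some tuple agreeing
with it on `X`, then `R'` still satisfies `{a'} → a`. -/
theorem donor_argument {α V T : Type*} [Fintype T]
    (X : Finset α) (a a' : α) (hne : a ≠ a')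
    (R R' : T → α → V)
    (h1 : SatFD R ⟨{a'}, a⟩)
    (h2 : SatFD R ⟨X, a⟩)
    (hkeep : ∀ (t : T) (c : α), c ≠ a' → R' t c = R t c)
    (hdonor : ∀ t : T, ∃ s : T, (∀ b ∈ X, R s b = R t b) ∧ R' t a' = R s a') :
    SatFD R' ⟨{a'}, a⟩ :=
  donor_argument_general h1 h2 (fun t => hkeep t a hne)
    (by simpa only [Finset.mem_singleton, forall_eq] using hdonor)
end
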